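/- Let ε > 0, let N ≥ 2 and Q0 ≥ 2 be real numbers with Q0 > N^{1/4}, let q1 ∈ ℤ[i] with Q0/√2 < N(q1) ≤ Q0, and let r1 ∈ ℤ[i] be coprime to q1. Set S(q1,r1,j) := ∑_{q∈ℤ[i]} exp(−π N(q)/(2Q0)) · e(Re(j r1 q² / q1²)). Then ∑_{j∈ℤ[i]\{0}} exp(−2π N(j) Q0²/N) · |S(q1,r1,j)|² ≤ C(ε) · (Q0 N)^ε · (Q0² + N/Q0), where C(ε) depends only on ε. -/

import Mathlib

noncomputable section

/-- `e(t) = exp(2πit)`. -/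
def e (t : ℝ) : ℂ := Complex.exp (2 * Real.pi * Complex.I * t)

/-- The norm of a Gaussian integer, as a real number. -/
def gN (z : GaussianInt) : ℝ := (z.re : ℝ) ^ 2 + (z.im : ℝ) ^ 2

/-- The smoothed quadratic Gauss-type sum
`S(q₁,r₁,j) = ∑_{q ∈ ℤ[i]} exp(-π N(q)/(2Q₀)) e(Re(j r₁ q²/q₁²))`. -/
def Ssum (Q0 : ℝ) (q1 r1 j : GaussianInt) : ℂ :=
  ∑' q : GaussianInt,
    ((Real.exp (-Real.pi * gN q / (2 * Q0)) : ℝ) : ℂ)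
      * e (((j : ℂ) * (r1 : ℂ) * (q : ℂ) ^ 2 / (q1 : ℂ) ^ 2).re)

open scoped ENNReal

def gEquiv : ℤ × ℤ ≃ GaussianInt where
  toFun p := ⟨p.1, p.2⟩
  invFun z := (z.re, z.im)
  left_inv _ := rfl
  right_inv _ := rfl

lemma tele_sum (S : ℝ) (hS : 0 < S) :
    ∑' n : ℕ, ENNReal.ofReal (2 * S ^ 2 / (S + (n + 1)) ^ 2) ≤ ENNReal.ofReal (2 * S) := by
  apply ENNReal.tsum_le_of_sum_range_le
  intro n
  rw [← ENNReal.ofReal_sum_of_nonneg (fun i _ => by positivity)]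
  apply ENNReal.ofReal_le_ofReal
  have h : ∑ i ∈ Finset.range n, 2 * S ^ 2 / (S + ((i : ℝ) + 1)) ^ 2
      ≤ 2 * S - 2 * S ^ 2 / (S + n) := by
    induction n with
    | zero => simp; apply le_of_eq; field_simp
    | succ n ih =>
      rw [Finset.sum_range_succ]
      have h2 : 2 * S ^ 2 / (S + ((n : ℝ) + 1)) ^ 2 ≤
          2 * S ^ 2 / (S + n) - 2 * S ^ 2 / (S + (n + 1)) := by
        have hn : (0 : ℝ) ≤ n := Nat.cast_nonneg n
        rw [div_sub_div _ _ (by positivity) (by positivity),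
          div_le_div_iff₀ (by positivity) (by positivity)]
        have : 2 * S ^ 2 * (S + (n + 1)) - (S + n) * (2 * S ^ 2) = 2 * S ^ 2 := by ring
        rw [this]
        have h3 : (S + n) * (S + ((n : ℝ) + 1)) ≤ (S + ((n : ℝ) + 1)) ^ 2 := by nlinarith
        exact mul_le_mul_of_nonneg_left h3 (by positivity)
      push_cast
      linarith
  have : 0 ≤ 2 * S ^ 2 / (S + n) := by positivity
  linarith

lemma term_bd (s : ℝ) (hs : 0 < s) (a : ℝ) (k : ℝ) (hk : 0 ≤ k) (h : k / 2 ≤ |a|) :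
    1 / (1 + a ^ 2 / s ^ 2) ≤ 2 * (2 * s) ^ 2 / (2 * s + k) ^ 2 := by
  have h1 : (k / 2) ^ 2 ≤ a ^ 2 := by rw [← sq_abs a]; gcongr
  have h2 : 1 / (1 + a ^ 2 / s ^ 2) = s ^ 2 / (s ^ 2 + a ^ 2) := by field_simp
  rw [h2, div_le_div_iff₀ (by positivity) (by positivity)]
  have h3 : (2 * s + k) ^ 2 ≤ 8 * (s ^ 2 + a ^ 2) := by nlinarith [sq_nonneg (2 * s - k)]
  nlinarith [mul_le_mul_of_nonneg_left h3 (sq_nonneg s)]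

lemma L1D (s x : ℝ) (hs : 0 < s) :
    ∑' n : ℤ, ENNReal.ofReal (1 / (1 + ((n : ℝ) + x) ^ 2 / s ^ 2)) ≤
      ENNReal.ofReal (8 * (1 + s)) := by
  wlog hx : |x| ≤ 1 / 2 generalizing x
  · have := this (x - round x) (abs_sub_round x)
    rw [← (Equiv.addRight (round x)).tsum_eq] at this
    refine le_trans (le_of_eq ?_) this
    apply tsum_congr
    intro n
    simp only [Equiv.coe_addRight]
    push_cast
    ring_nf
  rw [abs_le] at hx
  rw [tsum_of_nat_of_neg_add_one ENNReal.summable ENNReal.summable]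
  rw [tsum_eq_zero_add' ENNReal.summable]
  have h0 : ENNReal.ofReal (1 / (1 + ((((0 : ℕ) : ℤ) : ℝ) + x) ^ 2 / s ^ 2)) ≤ ENNReal.ofReal 1 := by
    apply ENNReal.ofReal_le_ofReal
    rw [div_le_one (by positivity)]
    have : 0 ≤ ((((0 : ℕ) : ℤ) : ℝ) + x) ^ 2 / s ^ 2 := by positivity
    linarith
  have h1 : ∑' n : ℕ, ENNReal.ofReal (1 / (1 + ((((n + 1 : ℕ) : ℤ) : ℝ) + x) ^ 2 / s ^ 2)) ≤
      ENNReal.ofReal (2 * (2 * s)) := by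
    refine le_trans (ENNReal.tsum_le_tsum fun n => ?_) (tele_sum (2 * s) (by positivity))
    apply ENNReal.ofReal_le_ofReal
    apply term_bd s hs _ _ (by positivity)
    push_cast
    have hn : (0 : ℝ) ≤ n := Nat.cast_nonneg n
    rw [abs_of_nonneg (by linarith)]
    linarith
  have h2 : ∑' n : ℕ, ENNReal.ofReal (1 / (1 + (((-((n : ℤ) + 1) : ℤ) : ℝ) + x) ^ 2 / s ^ 2)) ≤
      ENNReal.ofReal (2 * (2 * s)) := by
    refine le_trans (ENNReal.tsum_le_tsum fun n => ?_) (tele_sum (2 * s) (by positivity))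
    apply ENNReal.ofReal_le_ofReal
    apply term_bd s hs _ _ (by positivity)
    push_cast
    have hn : (0 : ℝ) ≤ n := Nat.cast_nonneg n
    rw [abs_of_nonpos (by linarith)]
    linarith
  refine le_trans (add_le_add (add_le_add h0 h1) h2) ?_
  rw [← ENNReal.ofReal_add (by positivity) (by positivity),
    ← ENNReal.ofReal_add (by positivity) (by positivity)]
  apply ENNReal.ofReal_le_ofReal
  linarith

lemma tsum_gauss_eq (f : GaussianInt → ℝ≥0∞) :
    ∑' m : GaussianInt, f m = ∑' (a : ℤ) (b : ℤ), f ⟨a, b⟩ := by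
  rw [← gEquiv.tsum_eq, ← ENNReal.tsum_prod]
  rfl

lemma tsum_gauss_mul (f g : ℤ → ℝ≥0∞) :
    ∑' m : GaussianInt, f m.re * g m.im = (∑' a, f a) * ∑' b, g b := by
  rw [tsum_gauss_eq]
  simp only [ENNReal.tsum_mul_left, ENNReal.tsum_mul_right]

lemma L1 (t x y : ℝ) (ht : 0 < t) :
    ∑' m : GaussianInt, ENNReal.ofReal
      (1 / (1 + (((m.re : ℝ) + x) ^ 2 + ((m.im : ℝ) + y) ^ 2) / t) ^ 2) ≤
      ENNReal.ofReal (128 * (1 + t)) := by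
  have hs : 0 < √t := Real.sqrt_pos.2 ht
  have hst : √t ^ 2 = t := Real.sq_sqrt ht.le
  calc _ ≤ ∑' m : GaussianInt, ENNReal.ofReal (1 / (1 + ((m.re : ℝ) + x) ^ 2 / √t ^ 2)) *
        ENNReal.ofReal (1 / (1 + ((m.im : ℝ) + y) ^ 2 / √t ^ 2)) := by
        refine ENNReal.tsum_le_tsum fun m => ?_
        rw [← ENNReal.ofReal_mul (by positivity)]
        apply ENNReal.ofReal_le_ofReal
        rw [hst, add_div]
        set a := ((m.re : ℝ) + x) ^ 2 / t with ha
        set b := ((m.im : ℝ) + y) ^ 2 / t with hb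
        have ha0 : 0 ≤ a := by positivity
        have hb0 : 0 ≤ b := by positivity
        rw [one_div_mul_one_div_rev, mul_comm]
        apply one_div_le_one_div_of_le (by positivity)
        nlinarith [mul_nonneg ha0 hb0, sq_nonneg a, sq_nonneg b]
    _ = _ := tsum_gauss_mul (fun n => ENNReal.ofReal (1 / (1 + ((n : ℝ) + x) ^ 2 / √t ^ 2)))
              (fun n => ENNReal.ofReal (1 / (1 + ((n : ℝ) + y) ^ 2 / √t ^ 2)))
    _ ≤ ENNReal.ofReal (8 * (1 + √t)) * ENNReal.ofReal (8 * (1 + √t)) :=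
        mul_le_mul' (L1D _ _ hs) (L1D _ _ hs)
    _ ≤ _ := by
        rw [← ENNReal.ofReal_mul (by positivity)]
        apply ENNReal.ofReal_le_ofReal
        nlinarith [sq_nonneg (1 - √t)]

lemma exp_ge_sq (x : ℝ) (hx : 0 ≤ x) : (1 + x) ^ 2 / 4 ≤ Real.exp x := by
  have h : 1 + x / 2 ≤ Real.exp (x / 2) := by linarith [Real.add_one_le_exp (x / 2)]
  have h2 : Real.exp x = Real.exp (x / 2) ^ 2 := by rw [← Real.exp_nat_mul]; ring_nf
  rw [h2]
  have : (1 + x / 2) ^ 2 ≤ Real.exp (x / 2) ^ 2 := by gcongr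
  nlinarith

lemma exp_neg_le (x u : ℝ) (hu : 0 ≤ u) (hx : u ≤ x) : Real.exp (-x) ≤ 4 * (1 / (1 + u) ^ 2) := by
  have h := exp_ge_sq u hu
  have h2 : Real.exp u ≤ Real.exp x := Real.exp_le_exp.2 hx
  rw [Real.exp_neg, ← one_div, mul_one_div, div_le_div_iff₀ (Real.exp_pos x) (by positivity)]
  nlinarith

lemma gN_nonneg (z : GaussianInt) : 0 ≤ gN z := by unfold gN; positivity

/-- Gaussian sum bound. -/
lemma gauss_sum_le (c t : ℝ) (ht : 0 < t) (hc : 1 / t ≤ c) :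
    ∑' m : GaussianInt, ENNReal.ofReal (Real.exp (-(c * gN m))) ≤
      ENNReal.ofReal (512 * (1 + t)) := by
  calc
    _ ≤ ∑' m : GaussianInt, ENNReal.ofReal 4 * ENNReal.ofReal
        (1 / (1 + (((m.re : ℝ) + 0) ^ 2 + ((m.im : ℝ) + 0) ^ 2) / t) ^ 2) := by
        refine ENNReal.tsum_le_tsum fun m => ?_
        rw [← ENNReal.ofReal_mul (by positivity)]
        apply ENNReal.ofReal_le_ofReal
        apply exp_neg_le
        · positivity
        · simp only [add_zero]
          have := mul_le_mul_of_nonneg_right hc (gN_nonneg m)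
          rw [div_mul_eq_mul_div, one_mul] at this
          exact this
    _ ≤ ENNReal.ofReal 4 * ENNReal.ofReal (128 * (1 + t)) := by
        rw [ENNReal.tsum_mul_left]
        gcongr
        exact L1 t 0 0 ht
    _ = _ := by
        rw [← ENNReal.ofReal_mul (by positivity)]
        ring_nf

def gNhom : GaussianInt →* ℝ where
  toFun := gN
  map_one' := by simp [gN]
  map_mul' a b := by
    simp only [gN, Zsqrtd.re_mul, Zsqrtd.im_mul]
    push_cast
    ring

lemma gN_mul (a b : GaussianInt) : gN (a * b) = gN a * gN b := gNhom.map_mul a b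

lemma gN_eq_int (z : GaussianInt) : gN z = ((z.re ^ 2 + z.im ^ 2 : ℤ) : ℝ) := by
  simp [gN]

lemma gN_ge_one (z : GaussianInt) (hz : z ≠ 0) : 1 ≤ gN z := by
  rw [gN_eq_int]
  have : 0 < z.re ^ 2 + z.im ^ 2 := by
    by_contra hcon
    apply hz
    have h1 : z.re = 0 := by nlinarith [sq_nonneg z.re, sq_nonneg z.im]
    have h2 : z.im = 0 := by nlinarith [sq_nonneg z.re, sq_nonneg z.im]
    exact Zsqrtd.ext h1 h2
  exact_mod_cast this

lemma gN_unit (u : GaussianInt) (hu : IsUnit u) : gN u = 1 := by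
  obtain ⟨v, hv⟩ := hu.exists_right_inv
  have h : gN u * gN v = 1 := by rw [← gN_mul, hv]; exact gNhom.map_one
  have hu0 : u ≠ 0 := hu.ne_zero
  have hv0 : v ≠ 0 := by rintro rfl; simp at hv
  nlinarith [gN_ge_one u hu0, gN_ge_one v hv0]

lemma unit_of_gN (u : GaussianInt) (hu : gN u = 1) : IsUnit u := by
  apply Zsqrtd.norm_eq_one_iff.1
  have h : u.re ^ 2 + u.im ^ 2 = 1 := by
    rw [gN_eq_int] at hu; exact_mod_cast hu
  have : u.norm = 1 := by rw [Zsqrtd.norm_def]; linarith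
  rw [this]; rfl

lemma gN_prime (p : GaussianInt) (hp : Prime p) : 2 ≤ gN p := by
  have h1 := gN_ge_one p hp.ne_zero
  have h2 : gN p ≠ 1 := fun h => hp.not_isUnit (unit_of_gN p h)
  rw [gN_eq_int] at *
  have h1' : (1 : ℤ) ≤ p.re ^ 2 + p.im ^ 2 := by exact_mod_cast h1
  have h2' : p.re ^ 2 + p.im ^ 2 ≠ (1 : ℤ) := by exact_mod_cast h2
  have : (2 : ℤ) ≤ p.re ^ 2 + p.im ^ 2 := by omega
  exact_mod_cast this

lemma small_finite (P : ℝ) : ∃ B : Finset GaussianInt, ∀ z, gN z ≤ P → z ∈ B := by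
  classical
  let K : ℤ := ⌈P⌉
  refine ⟨((Finset.Icc (-K) K) ×ˢ (Finset.Icc (-K) K)).map gEquiv.toEmbedding, fun z hz => ?_⟩
  have h : z.re ^ 2 + z.im ^ 2 ≤ K := by
    have : gN z ≤ (K : ℝ) := hz.trans (Int.le_ceil P)
    rw [gN_eq_int] at this
    exact_mod_cast this
  simp only [Finset.mem_map, Finset.mem_product, Finset.mem_Icc]
  have e1 : ∀ a b : ℤ, a ^ 2 + b ^ 2 ≤ K → -K ≤ a ∧ a ≤ K := by
    intro a b hab
    have h1 := Int.le_self_sq a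
    have h2 := Int.le_self_sq (-a)
    constructor <;> nlinarith [sq_nonneg b]
  exact ⟨(z.re, z.im), ⟨e1 _ _ h, e1 z.im z.re (by linarith)⟩, rfl⟩

lemma divisor_bound (ε : ℝ) (hε : 0 < ε) : ∃ D : ℝ, 0 < D ∧ ∀ m : GaussianInt, m ≠ 0 →
    ∃ s : Finset GaussianInt, (∀ h, h ∣ m → h ∈ s) ∧ (s.card : ℝ) ≤ D * gN m ^ ε := by
  classical
  let _ : StrongNormalizationMonoid GaussianInt := UniqueFactorizationMonoid.strongNormalizationMonoid
  obtain ⟨U, hU⟩ := small_finite 1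
  obtain ⟨B, hB⟩ := small_finite (2 ^ (1 / ε))
  have hl2 : 0 < Real.log 2 := Real.log_pos (by norm_num)
  set K : ℝ := 1 + 1 / (ε * Real.log 2) with hK
  have hK1 : 1 ≤ K := by
    have : 0 < 1 / (ε * Real.log 2) := by positivity
    linarith
  have hUc : 0 < U.card := Finset.card_pos.2 ⟨1, hU 1 (by simp [gN])⟩
  refine ⟨U.card * K ^ B.card, by positivity, fun m hm => ?_⟩
  set F := UniqueFactorizationMonoid.normalizedFactors m with hF
  refine ⟨Finset.image₂ (· * ·) ((Finset.Iic F).image Multiset.prod) U, fun h hh => ?_, ?_⟩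
  · have h0 : h ≠ 0 := by rintro rfl; exact hm (zero_dvd_iff.1 hh)
    obtain ⟨u, hu⟩ := UniqueFactorizationMonoid.prod_normalizedFactors h0
    rw [Finset.mem_image₂]
    refine ⟨_, Finset.mem_image.2 ⟨_, Finset.mem_Iic.2
      ((UniqueFactorizationMonoid.dvd_iff_normalizedFactors_le_normalizedFactors h0 hm).1 hh), rfl⟩,
      u, hU _ (gN_unit _ u.isUnit).le, hu⟩
  · have hprime : ∀ p ∈ F.toFinset, Prime p := fun p hp =>
      UniqueFactorizationMonoid.prime_of_normalized_factor p (Multiset.mem_toFinset.1 hp)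
    have hNm : gN m = ∏ p ∈ F.toFinset, gN p ^ F.count p := by
      obtain ⟨u, hu⟩ := UniqueFactorizationMonoid.prod_normalizedFactors hm
      rw [← hu, gN_mul, gN_unit _ u.isUnit, mul_one, Finset.prod_multiset_count]
      change gNhom _ = _
      rw [map_prod]
      apply Finset.prod_congr rfl
      intro p _
      rw [map_pow]; rfl
    have hcard : ((Finset.image₂ (· * ·) ((Finset.Iic F).image Multiset.prod) U).card : ℝ) ≤
        (∏ p ∈ F.toFinset, ((F.count p : ℝ) + 1)) * U.card := by
      have h1 := Finset.card_image₂_le (fun a b : GaussianInt => a * b)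
        ((Finset.Iic F).image Multiset.prod) U
      have h2 : ((Finset.Iic F).image Multiset.prod).card ≤ (Finset.Iic F).card :=
        Finset.card_image_le
      have h3 := h1.trans (Nat.mul_le_mul_right U.card h2)
      rw [Multiset.card_Iic] at h3
      exact_mod_cast h3
    have hprod : (∏ p ∈ F.toFinset, ((F.count p : ℝ) + 1)) ≤
        ∏ p ∈ F.toFinset, ((if p ∈ B then K else 1) * (gN p ^ F.count p) ^ ε) := by
      apply Finset.prod_le_prod
      · intro p _; positivity
      · intro p hp
        have hp2 := gN_prime p (hprime p hp)
        set k := F.count p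
        have hsw : (gN p ^ k) ^ ε = (gN p ^ ε) ^ k := by
          rw [← Real.rpow_natCast, ← Real.rpow_natCast, ← Real.rpow_mul (gN_nonneg p),
            ← Real.rpow_mul (gN_nonneg p), mul_comm]
        split_ifs with hpB
        · have h1 : Real.exp (ε * Real.log 2 * k) ≤ (gN p ^ k) ^ ε := by
            have : Real.exp (ε * Real.log 2 * k) = ((2 : ℝ) ^ ε) ^ k := by
              rw [Real.rpow_def_of_pos (by norm_num), ← Real.exp_nat_mul]; ring_nf
            rw [this, hsw]
            gcongr
          have h2 := Real.add_one_le_exp (ε * Real.log 2 * k)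
          have h3 : (k : ℝ) + 1 ≤ K * (ε * Real.log 2 * k + 1) := by
            have : K * (ε * Real.log 2 * k + 1) =
              k + 1 + ε * Real.log 2 * k + 1 / (ε * Real.log 2) := by
              rw [hK]; field_simp; ring
            rw [this]
            have : 0 ≤ ε * Real.log 2 * k + 1 / (ε * Real.log 2) := by positivity
            linarith
          refine h3.trans ?_
          gcongr
          exact h2.trans h1
        · rw [one_mul, hsw]
          have hbig : (2 : ℝ) ^ (1 / ε) < gN p := by
            by_contra hcon
            exact hpB (hB p (not_lt.1 hcon))
          have h2 : (2 : ℝ) ≤ gN p ^ ε := by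
            have : ((2 : ℝ) ^ (1 / ε)) ^ ε ≤ gN p ^ ε := by gcongr
            rwa [← Real.rpow_mul (by norm_num), one_div_mul_cancel hε.ne', Real.rpow_one] at this
          calc ((k : ℝ) + 1) ≤ 2 ^ k := by
                have := Nat.lt_two_pow_self (n := k)
                exact_mod_cast this
            _ ≤ _ := by gcongr
    rw [Finset.prod_mul_distrib, Real.finsetProd_rpow _ _ (fun p _ => pow_nonneg (gN_nonneg p) _),
      ← hNm] at hprod
    have hKB : ∏ p ∈ F.toFinset, (if p ∈ B then K else 1) ≤ K ^ B.card := by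
      rw [Finset.prod_ite, Finset.prod_const, Finset.prod_const_one, mul_one]
      apply pow_le_pow_right₀ hK1
      apply Finset.card_le_card
      intro p hp
      exact (Finset.mem_filter.1 hp).2
    have hNe : 0 ≤ gN m ^ ε := Real.rpow_nonneg (gN_nonneg m) _
    calc _ ≤ _ := hcard
      _ ≤ (K ^ B.card * gN m ^ ε) * U.card := by
        gcongr
        exact hprod.trans (by gcongr)
      _ = _ := by ring

lemma pois1 (Q : ℝ) (hQ : 0 < Q) (h : ℤ) (α : ℝ) :
    ‖∑' n : ℤ, ((Real.exp (-Real.pi * (((n : ℝ) + h) ^ 2 + (n : ℝ) ^ 2) / (2 * Q)) : ℝ) : ℂ) *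
      e (α * n)‖ₑ ≤ ENNReal.ofReal (√Q * Real.exp (-(Real.pi * (h : ℝ) ^ 2 / (4 * Q)))) *
        ∑' n : ℤ, ENNReal.ofReal (Real.exp (-(Real.pi * Q * ((n : ℝ) - α) ^ 2))) := by
  have hQc : (Q : ℂ) ≠ 0 := by exact_mod_cast hQ.ne'
  have hre : 0 < (((1 / Q : ℝ)) : ℂ).re := by
    rw [Complex.ofReal_re]; positivity
  have key := Complex.tsum_exp_neg_quadratic hre (-(h : ℂ) / (2 * Q) + Complex.I * α)
  have e1 : ∀ n : ℤ,
      ((Real.exp (-Real.pi * (((n : ℝ) + h) ^ 2 + (n : ℝ) ^ 2) / (2 * Q)) : ℝ) : ℂ) * e (α * n) =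
      Complex.exp (((-(Real.pi * (h : ℝ) ^ 2 / (2 * Q)) : ℝ)) : ℂ) *
      Complex.exp (-Real.pi * ((1 / Q : ℝ) : ℂ) * n ^ 2 +
        2 * Real.pi * (-(h : ℂ) / (2 * Q) + Complex.I * α) * n) := by
    intro n
    rw [e, Complex.ofReal_exp, ← Complex.exp_add, ← Complex.exp_add]
    congr 1
    push_cast
    field_simp
    ring
  simp_rw [e1]
  rw [tsum_mul_left, key, enorm_mul, enorm_mul]
  have e2 : ‖(1 : ℂ) / (((1 / Q : ℝ)) : ℂ) ^ ((1 : ℂ) / 2)‖ₑ = ENNReal.ofReal (√Q) := by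
    rw [← ofReal_norm, norm_div, norm_one,
      Complex.norm_cpow_eq_rpow_re_of_pos (by positivity)]
    congr 1
    have : ((1 : ℂ) / 2).re = 1 / 2 := by norm_num
    rw [this, ← Real.sqrt_eq_rpow, Real.sqrt_div (by norm_num), Real.sqrt_one, one_div_one_div]
  have e3 : ∀ n : ℤ, ‖Complex.exp (-Real.pi / ((1 / Q : ℝ) : ℂ) *
      (n + Complex.I * (-(h : ℂ) / (2 * Q) + Complex.I * α)) ^ 2)‖ₑ =
      ENNReal.ofReal (Real.exp (Real.pi * (h : ℝ) ^ 2 / (4 * Q))) *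
      ENNReal.ofReal (Real.exp (-(Real.pi * Q * ((n : ℝ) - α) ^ 2))) := by
    intro n
    rw [← ofReal_norm, Complex.norm_exp, ← ENNReal.ofReal_mul (by positivity),
      ← Real.exp_add]
    congr 2
    have : (-Real.pi / ((1 / Q : ℝ) : ℂ) *
      (n + Complex.I * (-(h : ℂ) / (2 * Q) + Complex.I * α)) ^ 2) =
      ((Real.pi * (h : ℝ) ^ 2 / (4 * Q) + -(Real.pi * Q * ((n : ℝ) - α) ^ 2) : ℝ) : ℂ) +
      ((Real.pi * h * (n - α) : ℝ) : ℂ) * Complex.I := by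
      push_cast
      have hI : Complex.I ^ 2 = -1 := Complex.I_sq
      have : ((n : ℂ) + Complex.I * (-(h : ℂ) / (2 * Q) + Complex.I * α)) =
        (n - α) - Complex.I * (h / (2 * Q)) := by
        linear_combination (α : ℂ) * hI
      rw [this]
      field_simp
      linear_combination (-4 * (h : ℂ) ^ 2) * hI
    rw [this, Complex.add_re, Complex.re_ofReal_mul, Complex.ofReal_re, Complex.I_re, mul_zero,
      add_zero]
  have e4 : ‖Complex.exp (((-(Real.pi * (h : ℝ) ^ 2 / (2 * Q)) : ℝ)) : ℂ)‖ₑ =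
      ENNReal.ofReal (Real.exp (-(Real.pi * (h : ℝ) ^ 2 / (2 * Q)))) := by
    rw [← ofReal_norm, Complex.norm_exp, Complex.ofReal_re]
  rw [e2, e4]
  have e5 : ENNReal.ofReal (√Q * Real.exp (-(Real.pi * (h : ℝ) ^ 2 / (4 * Q)))) =
      ENNReal.ofReal (Real.exp (-(Real.pi * (h : ℝ) ^ 2 / (2 * Q)))) * (ENNReal.ofReal (√Q) *
       ENNReal.ofReal (Real.exp (Real.pi * (h : ℝ) ^ 2 / (4 * Q)))) := by
    rw [← ENNReal.ofReal_mul (by positivity), ← ENNReal.ofReal_mul (by positivity),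
      mul_left_comm, ← Real.exp_add]
    congr 3
    field_simp
    ring
  rw [e5, mul_assoc, mul_assoc]
  gcongr
  rw [← ENNReal.tsum_mul_left]
  refine enorm_tsum_le_tsum_enorm.trans (le_of_eq ?_)
  exact tsum_congr e3

lemma e_add (a b : ℝ) : e (a + b) = e a * e b := by
  simp only [e]
  rw [← Complex.exp_add]
  congr 1
  push_cast
  ring

lemma e_conj (a : ℝ) : (starRingEnd ℂ) (e a) = e (-a) := by
  simp only [e]
  rw [← Complex.exp_conj]
  congr 1
  simp only [map_mul, Complex.conj_ofReal, Complex.conj_I, map_ofNat]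
  push_cast
  ring

lemma norm_e (a : ℝ) : ‖e a‖ = 1 := by
  simp only [e]
  rw [Complex.norm_exp]
  simp

def shear : GaussianInt × GaussianInt ≃ GaussianInt × GaussianInt where
  toFun p := (p.2 + p.1, p.2)
  invFun p := (p.1 - p.2, p.2)
  left_inv p := by ext <;> simp
  right_inv p := by ext <;> simp

lemma gauss_summable (Q : ℝ) (hQ : 0 < Q) :
    Summable fun q : GaussianInt => Real.exp (-Real.pi * gN q / (2 * Q)) := by
  have h := gauss_sum_le (Real.pi / (2 * Q)) (2 * Q) (by positivity)
    (by gcongr; linarith [Real.pi_gt_three])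
  have h2 := ENNReal.summable_toReal (ne_top_of_le_ne_top ENNReal.ofReal_ne_top h)
  refine h2.congr fun q => ?_
  rw [ENNReal.toReal_ofReal (by positivity)]
  congr 1
  ring

lemma inner_bd (Q : ℝ) (hQ : 0 < Q) (β : ℂ) (h : GaussianInt)
    (F : GaussianInt → ℂ)
    (hF : F = fun q => ((Real.exp (-Real.pi * gN q / (2 * Q)) : ℝ) : ℂ) *
      e ((β * (q : ℂ) ^ 2).re))
    (hs : Summable fun q => F (q + h) * (starRingEnd ℂ) (F q)) :
    ‖∑' q, F (q + h) * (starRingEnd ℂ) (F q)‖ₑ ≤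
      ENNReal.ofReal (Q * Real.exp (-(Real.pi * gN h / (4 * Q)))) *
      ∑' κ : GaussianInt, ENNReal.ofReal
        (Real.exp (-(Real.pi * Q * Complex.normSq ((κ : ℂ) + 2 * β * (h : ℂ))))) := by
  set γ : ℂ := 2 * β * (h : ℂ) with hγ
  set A : ℤ → ℂ := fun n =>
    ((Real.exp (-Real.pi * (((n : ℝ) + h.re) ^ 2 + (n : ℝ) ^ 2) / (2 * Q)) : ℝ) : ℂ) *
      e (γ.re * n) with hA
  set B : ℤ → ℂ := fun n =>
    ((Real.exp (-Real.pi * (((n : ℝ) + h.im) ^ 2 + (n : ℝ) ^ 2) / (2 * Q)) : ℝ) : ℂ) *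
      e (-γ.im * n) with hB
  have e1 : ∀ a b : ℤ, F ((⟨a, b⟩ : GaussianInt) + h) * (starRingEnd ℂ) (F ⟨a, b⟩) =
      e ((β * (h : ℂ) ^ 2).re) * (A a * B b) := by
    intro a b
    simp only [hF, hA, hB, map_mul, e_conj, Complex.conj_ofReal]
    have l1 : ∀ r1 r2 r3 r4 : ℝ, ∀ a1 a2 a3 a4 a5 : ℝ, r1 + r2 = r3 + r4 →
        a1 + a2 = a3 + a4 + a5 →
        ((Real.exp r1 : ℝ) : ℂ) * e a1 * (((Real.exp r2 : ℝ) : ℂ) * e a2) =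
        e a3 * (((Real.exp r3 : ℝ) : ℂ) * e a4 * (((Real.exp r4 : ℝ) : ℂ) * e a5)) := by
      intro r1 r2 r3 r4 a1 a2 a3 a4 a5 hr ha
      have h1 : ((Real.exp r1 : ℝ) : ℂ) * ((Real.exp r2 : ℝ) : ℂ) =
          ((Real.exp r3 : ℝ) : ℂ) * ((Real.exp r4 : ℝ) : ℂ) := by
        rw [← Complex.ofReal_mul, ← Complex.ofReal_mul, ← Real.exp_add, ← Real.exp_add, hr]
      have h2 : e a1 * e a2 = e a3 * e a4 * e a5 := by
        rw [← e_add, ← e_add, ← e_add, ha]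
      linear_combination (e a1 * e a2) * h1 +
        ((Real.exp r3 : ℝ) : ℂ) * ((Real.exp r4 : ℝ) : ℂ) * h2
    apply l1
    · simp only [gN, Zsqrtd.re_add, Zsqrtd.im_add]
      push_cast
      ring
    · have : γ.re * a + -γ.im * b = (γ * ((⟨a, b⟩ : GaussianInt) : ℂ)).re := by
        rw [Complex.mul_re γ, GaussianInt.re_toComplex, GaussianInt.im_toComplex]; ring
      rw [add_assoc, this, ← Complex.neg_re, ← Complex.add_re, ← Complex.add_re, hγ,
        GaussianInt.toComplex_add]
      congr 1
      ring
  have e2 : ∑' q, F (q + h) * (starRingEnd ℂ) (F q) =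
      e ((β * (h : ℂ) ^ 2).re) * ((∑' a, A a) * ∑' b, B b) := by
    rw [← gEquiv.tsum_eq]
    refine (Summable.tsum_prod (gEquiv.summable_iff.2 hs)).trans ?_
    simp only [Function.comp_apply]
    have : ∀ a b : ℤ, F (gEquiv (a, b) + h) * (starRingEnd ℂ) (F (gEquiv (a, b))) =
      e ((β * (h : ℂ) ^ 2).re) * (A a * B b) := e1
    simp_rw [this, tsum_mul_left, tsum_mul_right]
  rw [e2, enorm_mul, enorm_mul, ← ofReal_norm (e _), norm_e, ENNReal.ofReal_one, one_mul]
  refine (mul_le_mul' (pois1 Q hQ h.re γ.re) (pois1 Q hQ h.im (-γ.im))).trans (le_of_eq ?_)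
  rw [← (Equiv.neg ℤ).tsum_eq (fun n : ℤ => ENNReal.ofReal
    (Real.exp (-(Real.pi * Q * ((n : ℝ) - γ.re) ^ 2))))]
  rw [mul_mul_mul_comm, ← ENNReal.ofReal_mul (by positivity)]
  congr 1
  · congr 1
    rw [mul_mul_mul_comm, Real.mul_self_sqrt hQ.le, ← Real.exp_add]
    congr 2
    simp only [gN]
    ring
  · rw [← tsum_gauss_mul]
    apply tsum_congr
    intro κ
    rw [← ENNReal.ofReal_mul (by positivity), ← Real.exp_add]
    congr 2
    rw [Complex.normSq_apply, Complex.add_re, Complex.add_im, ← GaussianInt.intCast_re,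
      ← GaussianInt.intCast_im]
    simp only [Equiv.neg_apply]
    push_cast
    ring

lemma S_bd (Q : ℝ) (hQ : 0 < Q) (β : ℂ) :
    ‖∑' q : GaussianInt, ((Real.exp (-Real.pi * gN q / (2 * Q)) : ℝ) : ℂ) *
      e ((β * (q : ℂ) ^ 2).re)‖ₑ ^ 2 ≤
    ∑' h : GaussianInt, ENNReal.ofReal (Q * Real.exp (-(Real.pi * gN h / (4 * Q)))) *
      ∑' κ : GaussianInt, ENNReal.ofReal
        (Real.exp (-(Real.pi * Q * Complex.normSq ((κ : ℂ) + 2 * β * (h : ℂ))))) := by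
  set F : GaussianInt → ℂ := fun q => ((Real.exp (-Real.pi * gN q / (2 * Q)) : ℝ) : ℂ) *
      e ((β * (q : ℂ) ^ 2).re) with hF
  have hFn : Summable fun q => ‖F q‖ := by
    refine (gauss_summable Q hQ).congr fun q => ?_
    rw [hF]
    simp only [norm_mul, norm_e, mul_one, Complex.norm_real, Real.norm_eq_abs, Real.abs_exp]
  have hFn' : Summable fun q => ‖(starRingEnd ℂ) (F q)‖ := by
    simpa using hFn
  have hprod := summable_mul_of_summable_norm hFn hFn'
  have hprod2 : Summable fun z : GaussianInt × GaussianInt =>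
      F (z.2 + z.1) * (starRingEnd ℂ) (F z.2) := shear.summable_iff.2 hprod
  have h1 : (∑' q, F q) * (starRingEnd ℂ) (∑' q, F q) =
      ∑' h, ∑' q, F (q + h) * (starRingEnd ℂ) (F q) := by
    rw [Complex.conj_tsum, tsum_mul_tsum_of_summable_norm hFn hFn', ← shear.tsum_eq]
    exact Summable.tsum_prod hprod2
  have h2 : ‖∑' q, F q‖ₑ ^ 2 = ‖(∑' q, F q) * (starRingEnd ℂ) (∑' q, F q)‖ₑ := by
    rw [enorm_mul, sq]
    congr 1
    rw [← ofReal_norm, ← ofReal_norm, Complex.norm_conj]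
  rw [h2, h1]
  refine enorm_tsum_le_tsum_enorm.trans (ENNReal.tsum_le_tsum fun h => ?_)
  exact inner_bd Q hQ β h F hF (hprod2.prod_factor h)

lemma gN_normSq (z : GaussianInt) : gN z = Complex.normSq (z : ℂ) := by
  rw [Complex.normSq_apply, ← GaussianInt.intCast_re, ← GaussianInt.intCast_im, gN]
  ring

lemma real_tsum_le {ι : Type*} (f : ι → ℝ) (B : ℝ) (hB : 0 ≤ B) (hf : ∀ i, 0 ≤ f i)
    (h : ∑' i, ENNReal.ofReal (f i) ≤ ENNReal.ofReal B) : ∑' i, f i ≤ B := by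
  by_cases hs : Summable f
  · rw [← ENNReal.ofReal_tsum_of_nonneg hf hs] at h
    exact (ENNReal.ofReal_le_ofReal_iff hB).1 h
  · rw [tsum_eq_zero_of_not_summable hs]; exact hB

/-- The dual Gaussian weight. -/
def Wt (Q : ℝ) (q1 r1 m : GaussianInt) : ℝ≥0∞ :=
  ∑' κ : GaussianInt, ENNReal.ofReal (Real.exp (-(Real.pi / Q * gN (r1 * m + q1 ^ 2 * κ))))

lemma Ssum_bd (Q : ℝ) (hQ : 0 < Q) (q1 r1 j : GaussianInt) (h0 : q1 ≠ 0) (hq : gN q1 ≤ Q) :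
    ENNReal.ofReal (‖Ssum Q q1 r1 j‖ ^ 2) ≤
      ∑' h : GaussianInt, ENNReal.ofReal (Q * Real.exp (-(Real.pi * gN h / (4 * Q)))) *
        Wt Q q1 r1 (2 * j * h) := by
  have hc : (q1 : ℂ) ≠ 0 := by simpa using h0
  have h1 := S_bd Q hQ ((j : ℂ) * (r1 : ℂ) / (q1 : ℂ) ^ 2)
  have h2 : Ssum Q q1 r1 j = ∑' q : GaussianInt,
      ((Real.exp (-Real.pi * gN q / (2 * Q)) : ℝ) : ℂ) *
      e (((j : ℂ) * (r1 : ℂ) / (q1 : ℂ) ^ 2 * (q : ℂ) ^ 2).re) := by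
    rw [Ssum]
    apply tsum_congr
    intro q
    rw [div_mul_eq_mul_div]
  rw [ENNReal.ofReal_pow (norm_nonneg _), ofReal_norm, h2]
  refine h1.trans (ENNReal.tsum_le_tsum fun h => ?_)
  gcongr
  rw [Wt]
  refine ENNReal.tsum_le_tsum fun κ => ?_
  apply ENNReal.ofReal_le_ofReal
  apply Real.exp_le_exp.2
  apply neg_le_neg
  have h3 : gN (r1 * (2 * j * h) + q1 ^ 2 * κ) = gN q1 ^ 2 * Complex.normSq ((κ : ℂ) +
      2 * ((j : ℂ) * (r1 : ℂ) / (q1 : ℂ) ^ 2) * (h : ℂ)) := by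
    rw [gN_normSq, gN_normSq, ← map_pow, ← map_mul]
    congr 1
    simp only [map_add, map_mul, map_pow, map_ofNat]
    field_simp
    ring
  rw [h3]
  have hn := Complex.normSq_nonneg ((κ : ℂ) + 2 * ((j : ℂ) * (r1 : ℂ) / (q1 : ℂ) ^ 2) * (h : ℂ))
  set n := Complex.normSq ((κ : ℂ) + 2 * ((j : ℂ) * (r1 : ℂ) / (q1 : ℂ) ^ 2) * (h : ℂ))
  have h4 : gN q1 ^ 2 ≤ Q ^ 2 := by
    have := gN_nonneg q1
    gcongr
  calc Real.pi / Q * (gN q1 ^ 2 * n) ≤ Real.pi / Q * (Q ^ 2 * n) := by gcongr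
    _ = Real.pi * Q * n := by field_simp

def unimod (r u q v : GaussianInt) (h : u * r + v * q = 1) :
    GaussianInt × GaussianInt ≃ GaussianInt × GaussianInt where
  toFun p := (u * p.1 + q * p.2, v * p.1 - r * p.2)
  invFun p := (r * p.1 + q * p.2, v * p.1 - u * p.2)
  left_inv p := by
    ext1
    · linear_combination p.1 * h
    · linear_combination p.2 * h
  right_inv p := by
    ext1
    · linear_combination p.1 * h
    · linear_combination p.2 * h

lemma core (Q M : ℝ) (hQ : 0 < Q) (hM : 0 < M) (q1 r1 : GaussianInt)
    (h0 : q1 ≠ 0) (hq : Q ^ 2 ≤ 2 * gN q1 ^ 2) (hco : IsCoprime r1 q1) :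
    ∑' m : GaussianInt, ENNReal.ofReal (1 / (1 + gN m / M) ^ 2) * Wt Q q1 r1 m ≤
      ENNReal.ofReal (512 * (1 + Q)) * ENNReal.ofReal (128 * (1 + 2 * M / Q ^ 2)) := by
  obtain ⟨u, v, huv⟩ := (hco.pow_right (n := 2))
  have hc : (q1 : ℂ) ≠ 0 := by simpa using h0
  have hg : 0 < gN q1 := by linarith [gN_ge_one q1 h0]
  calc _ = ∑' p : GaussianInt × GaussianInt, ENNReal.ofReal (1 / (1 + gN p.1 / M) ^ 2) *
          ENNReal.ofReal (Real.exp (-(Real.pi / Q * gN (r1 * p.1 + q1 ^ 2 * p.2)))) := by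
        rw [ENNReal.tsum_prod (f := fun a b => ENNReal.ofReal (1 / (1 + gN a / M) ^ 2) *
          ENNReal.ofReal (Real.exp (-(Real.pi / Q * gN (r1 * a + q1 ^ 2 * b)))))]
        simp_rw [Wt, ENNReal.tsum_mul_left]
    _ = ∑' p : GaussianInt × GaussianInt, ENNReal.ofReal (Real.exp (-(Real.pi / Q * gN p.1))) *
          ENNReal.ofReal (1 / (1 + gN (u * p.1 + q1 ^ 2 * p.2) / M) ^ 2) := by
        rw [← (unimod r1 u (q1 ^ 2) v huv).tsum_eq]
        apply tsum_congr
        intro p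
        rw [mul_comm]
        have : r1 * ((unimod r1 u (q1 ^ 2) v huv) p).1 +
            q1 ^ 2 * ((unimod r1 u (q1 ^ 2) v huv) p).2 = p.1 := by
          simp only [unimod, Equiv.coe_fn_mk]
          linear_combination p.1 * huv
        rw [this]
        rfl
    _ = ∑' l : GaussianInt, ENNReal.ofReal (Real.exp (-(Real.pi / Q * gN l))) *
          ∑' k : GaussianInt, ENNReal.ofReal (1 / (1 + gN (u * l + q1 ^ 2 * k) / M) ^ 2) := by
        rw [ENNReal.tsum_prod (f := fun a b =>
          ENNReal.ofReal (Real.exp (-(Real.pi / Q * gN a))) *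
          ENNReal.ofReal (1 / (1 + gN (u * a + q1 ^ 2 * b) / M) ^ 2))]
        simp_rw [ENNReal.tsum_mul_left]
    _ ≤ ∑' l : GaussianInt, ENNReal.ofReal (Real.exp (-(Real.pi / Q * gN l))) *
          ENNReal.ofReal (128 * (1 + 2 * M / Q ^ 2)) := by
        refine ENNReal.tsum_le_tsum fun l => ?_
        gcongr
        set z : ℂ := (u : ℂ) * (l : ℂ) / (q1 : ℂ) ^ 2 with hz
        have := L1 (M / gN q1 ^ 2) z.re z.im (by positivity)
        refine le_trans (le_of_eq ?_) (this.trans ?_)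
        · apply tsum_congr
          intro k
          have h3 : gN (u * l + q1 ^ 2 * k) = gN q1 ^ 2 *
              (((k.re : ℝ) + z.re) ^ 2 + ((k.im : ℝ) + z.im) ^ 2) := by
            have : ((k.re : ℝ) + z.re) ^ 2 + ((k.im : ℝ) + z.im) ^ 2 =
                Complex.normSq ((k : ℂ) + z) := by
              rw [Complex.normSq_apply, Complex.add_re, Complex.add_im, ← GaussianInt.intCast_re,
                ← GaussianInt.intCast_im]
              ring
            rw [this, gN_normSq, gN_normSq, ← map_pow, ← map_mul]
            congr 1
            simp only [map_add, map_mul, map_pow, hz]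
            field_simp
            ring
          rw [h3]
          congr 4
          field_simp
        · apply ENNReal.ofReal_le_ofReal
          have : M / gN q1 ^ 2 ≤ 2 * M / Q ^ 2 := by
            rw [div_le_div_iff₀ (by positivity) (by positivity)]
            nlinarith
          linarith
    _ ≤ _ := by
        rw [ENNReal.tsum_mul_right]
        gcongr
        exact gauss_sum_le _ Q hQ (by gcongr; linarith [Real.pi_gt_three])

lemma fiber_bd (ε D : ℝ) (hD : ∀ m : GaussianInt, m ≠ 0 →
    ∃ s : Finset GaussianInt, (∀ h, h ∣ m → h ∈ s) ∧ (s.card : ℝ) ≤ D * gN m ^ ε)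
    (f : GaussianInt → ℝ≥0∞) :
    ∑' (j : GaussianInt) (h : GaussianInt), (if j ≠ 0 ∧ h ≠ 0 then f (2 * j * h) else 0) ≤
      ∑' m : GaussianInt, ENNReal.ofReal (D * gN m ^ ε) * f m := by
  classical
  have h1 : ∀ j h : GaussianInt, (if j ≠ 0 ∧ h ≠ 0 then f (2 * j * h) else 0) =
      ∑' m : GaussianInt, if (j ≠ 0 ∧ h ≠ 0) ∧ 2 * j * h = m then f m else 0 := by
    intro j h
    rw [tsum_eq_single (2 * j * h)]
    · simp
    · intro m hm
      rw [if_neg]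
      rintro ⟨_, h2⟩
      exact hm h2.symm
  simp_rw [h1]
  rw [ENNReal.tsum_comm]
  have h2 : ∀ h : GaussianInt, ∑' (j : GaussianInt) (m : GaussianInt),
      (if (j ≠ 0 ∧ h ≠ 0) ∧ 2 * j * h = m then f m else 0) =
      ∑' (m : GaussianInt) (j : GaussianInt),
      (if (j ≠ 0 ∧ h ≠ 0) ∧ 2 * j * h = m then f m else 0) := fun h => ENNReal.tsum_comm
  simp_rw [h2]
  rw [ENNReal.tsum_comm]
  refine ENNReal.tsum_le_tsum fun m => ?_
  by_cases hm : m = 0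
  · refine le_trans (le_of_eq ?_) (zero_le)
    simp only [ENNReal.tsum_eq_zero]
    intro h j
    rw [if_neg]
    rintro ⟨⟨hj, hh⟩, hjh⟩
    rw [hm] at hjh
    have h2 : (2 : GaussianInt) ≠ 0 := by decide
    exact mul_ne_zero (mul_ne_zero h2 hj) hh hjh
  · obtain ⟨s, hs, hcard⟩ := hD m hm
    have h3 : ∀ h : GaussianInt, ∑' j : GaussianInt,
        (if (j ≠ 0 ∧ h ≠ 0) ∧ 2 * j * h = m then f m else 0) ≤ if h ∈ s then f m else 0 := by
      intro h
      by_cases hex : ∃ j : GaussianInt, (j ≠ 0 ∧ h ≠ 0) ∧ 2 * j * h = m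
      · obtain ⟨j, ⟨hj, hh⟩, hjh⟩ := hex
        rw [tsum_eq_single j, if_pos ⟨⟨hj, hh⟩, hjh⟩, if_pos (hs h ⟨2 * j, by rw [← hjh]; ring⟩)]
        intro j' hj'
        rw [if_neg]
        rintro ⟨_, h5⟩
        rw [← hjh] at h5
        have h2 : (2 : GaussianInt) ≠ 0 := by decide
        exact hj' (mul_left_cancel₀ h2 (mul_right_cancel₀ hh h5))
      · refine le_trans (le_of_eq ?_) (zero_le)
        simp only [ENNReal.tsum_eq_zero]
        intro j
        rw [if_neg]
        exact fun h => hex ⟨j, h⟩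
    calc _ ≤ ∑' h : GaussianInt, if h ∈ s then f m else 0 := ENNReal.tsum_le_tsum h3
      _ = ∑ h ∈ s, if h ∈ s then f m else 0 := tsum_eq_sum fun h hh => if_neg hh
      _ = s.card * f m := by
        rw [Finset.sum_congr rfl (fun h hh => if_pos hh), Finset.sum_const, nsmul_eq_mul]
      _ ≤ _ := by
        gcongr
        rw [← ENNReal.ofReal_natCast]
        exact ENNReal.ofReal_le_ofReal hcard

lemma exp_cube (a b u : ℝ) (ha : 0 ≤ a) (hb : 0 ≤ b) (hu : 0 ≤ u) (huab : u ≤ a * b) :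
    Real.exp (-a) * Real.exp (-b) ≤ 125 * (1 / (1 + u) ^ 3) := by
  rw [← Real.exp_add, show -a + -b = -(a + b) by ring, Real.exp_neg]
  set x := a + b with hx
  have hx0 : 0 ≤ x := by positivity
  have h1 : 1 + x / 3 + (x / 3) ^ 2 / 2 ≤ Real.exp (x / 3) :=
    Real.quadratic_le_exp_of_nonneg (by positivity)
  have h2 : (1 + u) / 5 ≤ Real.exp (x / 3) := by nlinarith [sq_nonneg (a - b)]
  have h3 : Real.exp x = Real.exp (x / 3) ^ 3 := by rw [← Real.exp_nat_mul]; ring_nf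
  have h4 : ((1 + u) / 5) ^ 3 ≤ Real.exp x := by rw [h3]; gcongr
  calc (Real.exp x)⁻¹ ≤ (((1 + u) / 5) ^ 3)⁻¹ := by gcongr
    _ = _ := by field_simp; norm_num

lemma Wt_zero (Q : ℝ) (hQ : 2 ≤ Q) (q1 r1 : GaussianInt) (hq : Q ^ 2 ≤ 2 * gN q1 ^ 2) :
    Wt Q q1 r1 0 ≤ ENNReal.ofReal 1024 := by
  have h := gauss_sum_le (Real.pi / Q * gN q1 ^ 2) 1 one_pos (by
    rw [div_mul_eq_mul_div, le_div_iff₀ (by linarith)]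
    nlinarith [Real.pi_gt_three])
  refine le_trans (le_of_eq ?_) (h.trans (le_of_eq (by norm_num)))
  rw [Wt]
  apply tsum_congr
  intro κ
  rw [mul_zero, zero_add, gN_mul, sq, gN_mul]
  congr 3
  ring

lemma ennreal_main (ε D : ℝ) (hε : 0 < ε) (hε1 : ε ≤ 1) (hD0 : 0 < D)
    (hD : ∀ m : GaussianInt, m ≠ 0 →
    ∃ s : Finset GaussianInt, (∀ h, h ∣ m → h ∈ s) ∧ (s.card : ℝ) ≤ D * gN m ^ ε)
    (N Q : ℝ) (hN : 2 ≤ N) (hQ : 2 ≤ Q) (q1 r1 : GaussianInt) (h0 : q1 ≠ 0)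
    (hq : gN q1 ≤ Q) (hq' : Q ^ 2 ≤ 2 * gN q1 ^ 2) (hco : IsCoprime r1 q1) :
    ∑' j : {j : GaussianInt // j ≠ 0}, ENNReal.ofReal
      (Real.exp (-(2 * Real.pi) * gN (j : GaussianInt) * Q ^ 2 / N)
            * ‖Ssum Q q1 r1 (j : GaussianInt)‖ ^ 2) ≤
    ENNReal.ofReal (512 * (1 + N / Q ^ 2)) * ENNReal.ofReal (Q * 1024) +
    ENNReal.ofReal (125 * Q * D * (Q * N) ^ ε) * (
      ENNReal.ofReal (512 * (1 + Q)) * ENNReal.ofReal (128 * (1 + 2 * (N / Q) / Q ^ 2))) := by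
  classical
  have hQ0 : 0 < Q := by linarith
  have hN0 : 0 < N := by linarith
  set a : GaussianInt → ℝ := fun j => 2 * Real.pi * Q ^ 2 / N * gN j with ha
  set b : GaussianInt → ℝ := fun h => Real.pi * gN h / (4 * Q) with hb
  set f : GaussianInt → ℝ≥0∞ := fun m =>
    ENNReal.ofReal (Q * (125 * (1 / (1 + gN m / (N / Q)) ^ 3))) * Wt Q q1 r1 m with hf
  have step1 : ∀ j : {j : GaussianInt // j ≠ 0}, ENNReal.ofReal
      (Real.exp (-(2 * Real.pi) * gN (j : GaussianInt) * Q ^ 2 / N)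
            * ‖Ssum Q q1 r1 (j : GaussianInt)‖ ^ 2) ≤
      ENNReal.ofReal (Real.exp (-(a j))) * ENNReal.ofReal (Q * 1024) +
      ∑' h : GaussianInt, (if (j : GaussianInt) ≠ 0 ∧ h ≠ 0 then f (2 * j * h) else 0) := by
    rintro ⟨j, hj⟩
    have e1 : -(2 * Real.pi) * gN j * Q ^ 2 / N = -(a j) := by
      simp only [ha]; ring
    simp only [e1]
    rw [ENNReal.ofReal_mul (by positivity)]
    refine (mul_le_mul_right (Ssum_bd Q hQ0 q1 r1 j h0 hq) _).trans ?_
    rw [ENNReal.tsum_eq_add_tsum_ite (0 : GaussianInt), mul_add, ← ENNReal.tsum_mul_left]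
    apply add_le_add
    · refine mul_le_mul' le_rfl ?_
      rw [mul_zero]
      refine (mul_le_mul' (ENNReal.ofReal_le_ofReal (q := Q) ?_)
        (Wt_zero Q hQ q1 r1 hq')).trans (ENNReal.ofReal_mul hQ0.le).ge
      simp [gN]
    · refine ENNReal.tsum_le_tsum fun h => ?_
      by_cases hh : h = 0
      · simp [hh]
      · rw [if_neg hh, if_pos ⟨hj, hh⟩, ← mul_assoc, hf, ← ENNReal.ofReal_mul (by positivity)]
        dsimp only
        refine mul_le_mul' (ENNReal.ofReal_le_ofReal ?_) le_rfl
        rw [mul_left_comm]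
        refine mul_le_mul_of_nonneg_left ?_ hQ0.le
        have hgj := gN_nonneg j
        have hgh := gN_nonneg h
        have hgm := gN_nonneg (2 * j * h)
        apply exp_cube
        · positivity
        · positivity
        · positivity
        · have e2 : gN (2 * j * h) = 4 * gN j * gN h := by
            rw [gN_mul, gN_mul]
            have : gN 2 = 4 := by
              have : (2 : GaussianInt) = ⟨2, 0⟩ := by decide
              rw [this, gN]; norm_num
            rw [this]
          have e3 : a j * b h = Real.pi ^ 2 / 8 * (gN (2 * j * h) / (N / Q)) := by
            rw [e2]
            simp only [ha, hb]
            field_simp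
            ring
          change _ ≤ a j * b h
          rw [e3]
          have hp : 1 ≤ Real.pi ^ 2 / 8 := by nlinarith [Real.pi_gt_three]
          have : 0 ≤ gN (2 * j * h) / (N / Q) := by positivity
          nlinarith
  refine (ENNReal.tsum_le_tsum step1).trans ?_
  rw [ENNReal.tsum_add]
  apply add_le_add
  · rw [ENNReal.tsum_mul_right]
    gcongr
    refine (ENNReal.tsum_comp_le_tsum_of_injective Subtype.val_injective
      (fun j : GaussianInt => ENNReal.ofReal (Real.exp (-(a j))))).trans ?_
    apply gauss_sum_le _ _ (by positivity)
    rw [one_div_div]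
    gcongr
    nlinarith [Real.pi_gt_three, sq_nonneg Q]
  · refine (ENNReal.tsum_comp_le_tsum_of_injective Subtype.val_injective
      (fun j : GaussianInt => ∑' h : GaussianInt,
        (if j ≠ 0 ∧ h ≠ 0 then f (2 * j * h) else 0))).trans ?_
    refine (fiber_bd ε D hD f).trans ?_
    refine le_trans ?_ (mul_le_mul_right
      (core Q (N / Q) hQ0 (by positivity) q1 r1 h0 hq' hco) _)
    rw [← ENNReal.tsum_mul_left]
    refine ENNReal.tsum_le_tsum fun m => ?_
    have hgm := gN_nonneg m
    rw [hf]
    dsimp only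
    rw [← mul_assoc (ENNReal.ofReal _), ← mul_assoc (ENNReal.ofReal _),
      ← ENNReal.ofReal_mul (by positivity), ← ENNReal.ofReal_mul (by positivity)]
    refine mul_le_mul' (ENNReal.ofReal_le_ofReal ?_) le_rfl
    set u := gN m / (N / Q) with hu
    have hu0 : 0 ≤ u := by positivity
    have hm : gN m ≤ (Q * N) * (1 + u) := by
      have e1 : gN m = N / Q * u := by rw [hu]; field_simp
      have e2 : N / Q ≤ Q * N := by
        rw [div_le_iff₀ hQ0]; nlinarith [mul_pos hN0 hQ0]
      rw [e1]
      have : N / Q * u ≤ Q * N * u := by gcongr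
      nlinarith [mul_pos hN0 hQ0]
    have hm2 : gN m ^ ε ≤ (Q * N) ^ ε * (1 + u) := by
      calc gN m ^ ε ≤ ((Q * N) * (1 + u)) ^ ε := by gcongr
        _ = (Q * N) ^ ε * (1 + u) ^ ε := Real.mul_rpow (by positivity) (by positivity)
        _ ≤ (Q * N) ^ ε * (1 + u) := by
          gcongr
          calc (1 + u) ^ ε ≤ (1 + u) ^ (1 : ℝ) :=
                Real.rpow_le_rpow_of_exponent_le (by linarith) hε1
            _ = _ := Real.rpow_one _
    calc D * gN m ^ ε * (Q * (125 * (1 / (1 + u) ^ 3))) ≤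
        D * ((Q * N) ^ ε * (1 + u)) * (Q * (125 * (1 / (1 + u) ^ 3))) := by gcongr
      _ = _ := by field_simp

/-- **The averaged bound for the quadratic sums** (inequality (31) of the paper).
For `ε > 0` there is `C(ε)` such that for `N, Q₀ ≥ 2` with `Q₀ > N^{1/4}`,
`Q₀/√2 < N(q₁) ≤ Q₀` and `r₁` coprime to `q₁`,
`∑_{j ≠ 0} exp(-2π N(j) Q₀²/N) |S(q₁,r₁,j)|² ≤ C(ε) (Q₀N)^ε (Q₀² + N/Q₀)`. -/
theorem averaged_bound_square_sum :
    ∀ ε : ℝ, 0 < ε → ∃ C : ℝ, 0 < C ∧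
      ∀ (N Q0 : ℝ), 2 ≤ N → 2 ≤ Q0 → N ^ ((1 : ℝ) / 4) < Q0 →
      ∀ q1 : GaussianInt, Q0 / Real.sqrt 2 < gN q1 → gN q1 ≤ Q0 →
      ∀ r1 : GaussianInt, IsCoprime r1 q1 →
      (∑' j : {j : GaussianInt // j ≠ 0},
          Real.exp (-(2 * Real.pi) * gN (j : GaussianInt) * Q0 ^ 2 / N)
            * ‖Ssum Q0 q1 r1 (j : GaussianInt)‖ ^ 2)
        ≤ C * (Q0 * N) ^ ε * (Q0 ^ 2 + N / Q0) := by
  intro ε hε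
  obtain ⟨D, hD0, hD⟩ := divisor_bound (min ε 1) (lt_min hε one_pos)
  refine ⟨512 * 1024 + 4 * (125 * 512 * 128) * D, by positivity, ?_⟩
  intro N Q hN hQ _ q1 hq1 hq r1 hco
  have hQ0 : 0 < Q := by linarith
  have hN0 : 0 < N := by linarith
  have hs2 : 0 < √2 := Real.sqrt_pos.2 (by norm_num)
  have hg : 0 < gN q1 := lt_trans (by positivity) hq1
  have h0 : q1 ≠ 0 := by
    rintro rfl
    simp [gN] at hg
  have hq' : Q ^ 2 ≤ 2 * gN q1 ^ 2 := by
    rw [div_lt_iff₀ hs2] at hq1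
    have : Q ^ 2 ≤ (gN q1 * √2) ^ 2 := by gcongr
    rw [mul_pow, Real.sq_sqrt (by norm_num)] at this
    linarith
  apply real_tsum_le _ _ (by positivity) (fun j => by positivity)
  refine (ennreal_main (min ε 1) D (lt_min hε one_pos) (min_le_right _ _) hD0 hD N Q hN hQ q1 r1
    h0 hq hq' hco).trans ?_
  rw [← ENNReal.ofReal_mul (by positivity), ← ENNReal.ofReal_mul (by positivity),
    ← ENNReal.ofReal_mul (by positivity), ← ENNReal.ofReal_add (by positivity) (by positivity)]
  apply ENNReal.ofReal_le_ofReal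
  have hQN : 1 ≤ Q * N := by nlinarith
  have hP : (Q * N) ^ (min ε 1) ≤ (Q * N) ^ ε :=
    Real.rpow_le_rpow_of_exponent_le hQN (min_le_left _ _)
  have hP1 : 1 ≤ (Q * N) ^ ε := Real.one_le_rpow hQN hε.le
  set P := (Q * N) ^ ε
  set Y := Q ^ 2 + N / Q with hY
  have hY0 : 0 < Y := by positivity
  have h1 : 512 * (1 + N / Q ^ 2) * (Q * 1024) ≤ 512 * 1024 * P * Y := by
    have e1 : 512 * (1 + N / Q ^ 2) * (Q * 1024) = 512 * 1024 * (Q + N / Q) := by field_simp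
    have e2 : Q + N / Q ≤ Y := by rw [hY]; nlinarith
    rw [e1]
    nlinarith [mul_le_mul_of_nonneg_right hP1 hY0.le]
  have h2 : 125 * Q * D * (Q * N) ^ (min ε 1) *
      (512 * (1 + Q) * (128 * (1 + 2 * (N / Q) / Q ^ 2))) ≤
      4 * (125 * 512 * 128) * D * P * Y := by
    have e1 : Q * (1 + Q) * (1 + 2 * (N / Q) / Q ^ 2) ≤ 4 * Y := by
      calc Q * (1 + Q) * (1 + 2 * (N / Q) / Q ^ 2) ≤
          Q * (Q + Q) * (1 + 2 * (N / Q) / Q ^ 2) := by gcongr; linarith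
        _ = 2 * Q ^ 2 + 4 * (N / Q) := by field_simp; ring
        _ ≤ 4 * Y := by rw [hY]; nlinarith [sq_nonneg Q]
    calc _ = 125 * 512 * 128 * D * (Q * N) ^ (min ε 1) *
          (Q * (1 + Q) * (1 + 2 * (N / Q) / Q ^ 2)) := by ring
      _ ≤ 125 * 512 * 128 * D * P * (4 * Y) := by gcongr
      _ = _ := by ring
  nlinarith
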